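/- Let n ≥ 3 and let G be the multigraph with multiplicities whose vertex set is ℤ_n, whose underlying edges are e_j = {j−1, j} for j = 1,…,n (indices modulo n, so the underlying graph is an n-cycle), with multiplicities m_j = μ(e_j) ≥ 1. Then T(G;x,y) = Σ_{k=1}^{n−2} ( Π_{j=k+1}^{n} y_x(m_j) · Π_{j=1}^{k−1} y_1(m_j) ) + y_x(m_{n−1} + m_n) · Π_{j=1}^{n−2} y_1(m_j), where y_x(j) := x + Σ_{i=1}^{j−1} y^i and y_1(j) := 1 + Σ_{i=1}^{j−1} y^i. -/

import Mathlib

/-!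
A set of edges of the fat cycle is a family of sets of parallel copies, one for each `e_j`. Its rank
only depends on the set `S` of those `j` for which at least one copy is chosen, and it equals `|S|`
when `S` is proper (a path is a forest) and `n - 1` when `S` is everything. Since
`∑_{∅ ≠ B ⊆ [m]} (y - 1)^{|B| - 1} = y_1(m)`, the subset expansion becomes, with `a_j = y_1(m_j)`,
`T = ∑_{S proper} (x - 1)^{n - 1 - |S|} ∏_{j ∈ S} a_j + (y - 1) ∏_j a_j`.

Sorting the proper `S` by their least missing element `k` gives
`∑_{k=1}^n ∏_{j > k} (a_j + x - 1) ∏_{j < k} a_j`, where `a_j + x - 1 = y_x(m_j)`. The terms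
`k = n - 1`, `k = n` and the `(y - 1)`-term merge into the last summand of the formula by
`y_x(a + b) = y_x(b) + y_1(a) + (y - 1) y_1(a) y_1(b)`.
-/

open scoped Classical

noncomputable section

/-- A multigraph is encoded by a map `ε : E → Sym2 V` assigning to each edge index its
unordered pair of endpoints.  `graphOf ε A` is the simple graph on `V` whose edges are the
endpoint pairs of the edges in `A`. -/
def graphOf {V E : Type*} (ε : E → Sym2 V) (A : Set E) : SimpleGraph V :=
  SimpleGraph.fromEdgeSet (ε '' A)

/-- Number of connected components of the graph `(V, ε(A))` (isolated vertices count). -/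
def kappa {V E : Type*} (ε : E → Sym2 V) (A : Set E) : ℕ :=
  Nat.card (graphOf ε A).ConnectedComponent

/-- Rank function `r(A) = |V| − κ(A)`. -/
def rk {V E : Type*} (ε : E → Sym2 V) (A : Set E) : ℕ :=
  Nat.card V - kappa ε A

/-- Tutte polynomial of a multigraph, evaluated at `(x, y) ∈ ℂ²`:
`T(G;x,y) = Σ_{A ⊆ E} (x−1)^{r(E)−r(A)} (y−1)^{|A|−r(A)}`. -/
def tutte {V E : Type*} (ε : E → Sym2 V) (x y : ℂ) : ℂ :=
  ∑ᶠ A : Set E,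
    (x - 1) ^ (rk ε Set.univ - rk ε A) * (y - 1) ^ (A.ncard - rk ε A)

/-- The edge index set of the multigraph determined by a multigraph with multiplicities
`(V, D, μ)`: one copy `Fin (μ d)` of each underlying pair `d ∈ D`. -/
def multiE {V : Type*} (D : Finset (Sym2 V)) (μ : Sym2 V → ℕ) : Type _ :=
  Σ d : D, Fin (μ d.1)

/-- The endpoint map of the multigraph determined by `(V, D, μ)`. -/
def multiEps {V : Type*} (D : Finset (Sym2 V)) (μ : Sym2 V → ℕ) :
    multiE D μ → Sym2 V :=
  fun p => p.1.1

/-- `y_x(j) = x + Σ_{i=1}^{j−1} yⁱ`. -/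
def yx (x y : ℂ) (j : ℕ) : ℂ := x + ∑ i ∈ Finset.Icc 1 (j - 1), y ^ i

/-- `y_1(j) = 1 + Σ_{i=1}^{j−1} yⁱ`. -/
def y1 (y : ℂ) (j : ℕ) : ℂ := 1 + ∑ i ∈ Finset.Icc 1 (j - 1), y ^ i

/-- The underlying edge `e_j = {j−1, j}` of the `n`-cycle on `ℤ_n`. -/
def cycEdge (n : ℕ) (j : ℕ) : Sym2 (ZMod n) := s((j : ZMod n) - 1, (j : ZMod n))

section Rank

variable {V E : Type*} (ε : E → Sym2 V)

theorem rk_comp {F : Type*} (f : F → E) (A : Set F) : rk (ε ∘ f) A = rk ε (f '' A) := by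
  simp only [rk, kappa, graphOf, Set.image_comp]

/-- Recolouring the old component of one end of `e` as that of the other end gives a map that is
constant on the new components and misses at most one old component. -/
theorem kappa_le_kappa_insert_add_one [Finite V] (e : E) (A : Set E) :
    kappa ε A ≤ kappa ε (insert e A) + 1 := by
  obtain ⟨u, v, huv⟩ : ∃ u v, ε e = s(u, v) := Sym2.exists.1 ⟨ε e, rfl⟩
  set G := graphOf ε A
  let recolour (w : V) : G.ConnectedComponent :=
    if G.connectedComponentMk w = G.connectedComponentMk v then G.connectedComponentMk u
    else G.connectedComponentMk w
  have recolour_adj {a b : V} (hab : (graphOf ε (insert e A)).Adj a b) :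
      recolour a = recolour b := by
    simp only [graphOf, Set.image_insert_eq, SimpleGraph.fromEdgeSet_adj,
      Set.mem_insert_iff, huv] at hab
    obtain ⟨hab | hab, hne⟩ := hab
    · rcases Sym2.eq_iff.1 hab with ⟨rfl, rfl⟩ | ⟨rfl, rfl⟩ <;> simp [recolour]
    · have hG : G.Adj a b := (SimpleGraph.fromEdgeSet_adj _).2 ⟨hab, hne⟩
      simp only [recolour, SimpleGraph.ConnectedComponent.eq.2 hG.reachable]
  have recolour_walk {a b : V} (p : (graphOf ε (insert e A)).Walk a b) :
      recolour a = recolour b := by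
    induction p with
    | nil => rfl
    | cons h _ ih => exact (recolour_adj h).trans ih
  let lifted : (graphOf ε (insert e A)).ConnectedComponent → G.ConnectedComponent :=
    SimpleGraph.ConnectedComponent.lift recolour fun _ _ p _ => recolour_walk p
  have hcover : Set.univ ⊆ insert (G.connectedComponentMk v) (Set.range lifted) := by
    rintro ⟨w⟩ -
    by_cases hw : G.connectedComponentMk w = G.connectedComponentMk v
    · exact Or.inl hw
    · exact Or.inr ⟨SimpleGraph.connectedComponentMk _ w, if_neg hw⟩
  calc kappa ε A = (Set.univ : Set G.ConnectedComponent).ncard := (Set.ncard_univ _).symm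
    _ ≤ (insert (G.connectedComponentMk v) (Set.range lifted)).ncard := Set.ncard_le_ncard hcover
    _ ≤ (Set.range lifted).ncard + 1 := Set.ncard_insert_le _ _
    _ ≤ kappa ε (insert e A) + 1 := by
      gcongr
      exact Finite.card_range_le lifted

theorem rk_empty : rk ε ∅ = 0 := by
  have hinj : Function.Injective (graphOf ε ∅).connectedComponentMk := by
    simp [Function.Injective, graphOf, SimpleGraph.reachable_bot]
  have hcard : Nat.card V = kappa ε ∅ :=
    Nat.card_congr (Equiv.ofBijective _ ⟨hinj, Quot.mk_surjective⟩)
  rw [rk, hcard, Nat.sub_self]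

theorem rk_union_le [Finite V] (A : Set E) {B : Set E} (hB : B.Finite) :
    rk ε (A ∪ B) ≤ rk ε A + B.ncard := by
  induction B, hB using Set.Finite.induction_on with
  | empty => simp
  | @insert e B he hB ih =>
    have := kappa_le_kappa_insert_add_one ε e (A ∪ B)
    rw [Set.union_insert, Set.ncard_insert_of_notMem he hB]
    simp only [rk] at ih ⊢
    omega

theorem rk_le_ncard [Finite V] {A : Set E} (hA : A.Finite) : rk ε A ≤ A.ncard := by
  simpa [rk_empty] using rk_union_le ε ∅ hA

theorem rk_eq_ncard_of_subset [Finite V] {A B : Set E} (hB : B.Finite)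
    (hrk : rk ε B = B.ncard) (hAB : A ⊆ B) : rk ε A = A.ncard := by
  have hle : rk ε A ≤ A.ncard := rk_le_ncard ε (hB.subset hAB)
  have hge : rk ε B ≤ rk ε A + (B \ A).ncard := by
    simpa [Set.union_eq_self_of_subset_left hAB] using rk_union_le ε A (hB.sdiff (t := A))
  have := Set.ncard_sdiff_add_ncard_of_subset hAB hB
  omega

theorem rk_eq_card_sub_one {A : Set E} (h : (graphOf ε A).Connected) :
    rk ε A = Nat.card V - 1 := by
  obtain ⟨v⟩ := h.nonempty
  have := h.preconnected.subsingleton_connectedComponent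
  rw [rk, kappa, Nat.card_eq_one_iff_unique.2 ⟨this, ⟨(graphOf ε A).connectedComponentMk v⟩⟩]

end Rank

section Thickening

open Finset

theorem y1_eq_geom_sum (y : ℂ) {j : ℕ} (hj : 1 ≤ j) : y1 y j = ∑ i ∈ range j, y ^ i := by
  obtain ⟨k, rfl⟩ := Nat.exists_eq_add_of_le' hj
  rw [y1, Nat.add_sub_cancel, sum_range_succ', pow_zero, add_comm, range_eq_Ico,
    sum_Ico_add' (fun i => y ^ i) 0 k 1]
  rfl

theorem sum_nonempty_sub_one_pow {R ι : Type*} [CommRing R] (y : R) (s : Finset ι) :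
    ∑ B ∈ s.powerset with B.Nonempty, (y - 1) ^ (#B - 1) = ∑ i ∈ range #s, y ^ i := by
  induction s using Finset.induction_on with
  | empty => simp [sum_filter]
  | insert a s ha ih =>
    have hbinom : ∑ B ∈ s.powerset, (y - 1) ^ #B = y ^ #s := by
      simpa using sum_pow_mul_eq_add_pow (y - 1) 1 s
    rw [card_insert_of_notMem ha, sum_range_succ, ← ih, ← hbinom, sum_filter,
      sum_powerset_insert ha, ← sum_filter]
    congr 1
    refine sum_congr rfl fun B hB => ?_
    rw [if_pos (insert_nonempty a B), card_insert_of_notMem fun h => ha (mem_powerset.1 hB h),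
      Nat.add_sub_cancel]

variable {V ι R : Type*} {β : ι → Type*} [Fintype ι]

theorem card_univ_sigma (p : ∀ i, Finset (β i)) :
    #(univ.sigma p) = #{i | (p i).Nonempty} + ∑ i with (p i).Nonempty, (#(p i) - 1) := by
  rw [card_sigma, card_eq_sum_ones, ← sum_add_distrib, sum_filter]
  refine sum_congr rfl fun i _ => ?_
  split_ifs with h
  · have := h.card_pos
    omega
  · simp [not_nonempty_iff_eq_empty.1 h]

theorem image_fst_univ_sigma (p : ∀ i, Finset (β i)) :
    Sigma.fst '' (univ.sigma p : Set (Σ i, β i)) = ({i | (p i).Nonempty} : Finset ι) := by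
  ext i
  simp only [Set.mem_image, mem_coe, mem_sigma, mem_univ, true_and, Sigma.exists, mem_filter,
    exists_and_right, exists_eq_right]
  rfl

variable [∀ i, Fintype (β i)]

theorem finsum_set_sigma [AddCommMonoid R] (f : Set (Σ i, β i) → R) :
    ∑ᶠ A, f A = ∑ p : ∀ i, Finset (β i), f (univ.sigma p : Finset (Σ i, β i)) := by
  let e : (∀ i, Finset (β i)) ≃ Set (Σ i, β i) :=
    { toFun p := (univ.sigma p : Finset (Σ i, β i))
      invFun A i := {b | (⟨i, b⟩ : Σ i, β i) ∈ A}
      left_inv p := by ext; simp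
      right_inv A := by ext; simp }
  rw [finsum_eq_sum_of_fintype, ← e.sum_comp]
  rfl

theorem sum_pi_finset_eq_sum_prod [CommSemiring R] (g : Finset ι → R)
    (w : ∀ i, Finset (β i) → R) :
    ∑ p : ∀ i, Finset (β i), g {i | (p i).Nonempty} * ∏ i with (p i).Nonempty, w i (p i) =
      ∑ S, g S * ∏ i ∈ S, ∑ B with B.Nonempty, w i B := by
  rw [← sum_fiberwise univ fun p : ∀ i, Finset (β i) => ({i | (p i).Nonempty} : Finset ι)]
  refine sum_congr rfl fun S _ => ?_
  have hfiber : ({p | ({i | (p i).Nonempty} : Finset ι) = S} : Finset (∀ i, Finset (β i))) =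
      Fintype.piFinset fun i => if i ∈ S then ({B | B.Nonempty} : Finset (Finset (β i)))
        else {∅} := by
    ext p
    simp only [mem_filter_univ, Fintype.mem_piFinset, Finset.ext_iff (s₂ := S)]
    refine forall_congr' fun i => ?_
    by_cases hi : i ∈ S <;> simp [hi, not_nonempty_iff_eq_empty]
  calc ∑ p : ∀ i, Finset (β i) with ({i | (p i).Nonempty} : Finset ι) = S,
        g {i | (p i).Nonempty} * ∏ i with (p i).Nonempty, w i (p i)
      = g S * ∑ p : ∀ i, Finset (β i) with ({i | (p i).Nonempty} : Finset ι) = S,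
          ∏ i, if i ∈ S then w i (p i) else 1 := by
        rw [mul_sum]
        refine sum_congr rfl fun p hp => ?_
        rw [(mem_filter.1 hp).2, prod_ite_mem, univ_inter]
    _ = g S * ∏ i ∈ S, ∑ B with B.Nonempty, w i B := by
        rw [hfiber, ← prod_univ_sum _ fun i B => if i ∈ S then w i B else 1,
          ← prod_subset (subset_univ S) fun i _ hi => by simp [hi]]
        congr 1
        exact prod_congr rfl fun i hi => by simp only [hi, if_true]

theorem tutte_sigma [Finite V] [∀ i, Nonempty (β i)] (ε : ι → Sym2 V) (x y : ℂ) :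
    tutte (ε ∘ Sigma.fst : (Σ i, β i) → Sym2 V) x y =
      ∑ S : Finset ι, (x - 1) ^ (rk ε Set.univ - rk ε S) * (y - 1) ^ (#S - rk ε S) *
        ∏ i ∈ S, y1 y (Fintype.card (β i)) := by
  have hfiber (i : ι) : y1 y (Fintype.card (β i)) =
      ∑ B : Finset (β i) with B.Nonempty, (y - 1) ^ (#B - 1) := by
    rw [y1_eq_geom_sum y Fintype.card_pos, ← card_univ, ← sum_nonempty_sub_one_pow, powerset_univ]
  simp only [hfiber]
  rw [tutte, finsum_set_sigma, ← sum_pi_finset_eq_sum_prod]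
  refine sum_congr rfl fun p _ => ?_
  have hle := rk_le_ncard ε (finite_toSet {i | (p i).Nonempty})
  rw [Set.ncard_coe_finset] at hle
  rw [rk_comp, rk_comp, Set.image_univ_of_surjective Sigma.fst_surjective, image_fst_univ_sigma,
    Set.ncard_coe_finset, card_univ_sigma, Nat.sub_add_comm hle, pow_add, prod_pow_eq_pow_sum,
    mul_assoc]

theorem sum_powerset_image [AddCommMonoid R] {α γ : Type*} [DecidableEq γ] {f : α → γ}
    {s : Finset α} (hf : Set.InjOn f s) (g : Finset γ → R) :
    ∑ T ∈ (s.image f).powerset, g T = ∑ S ∈ s.powerset, g (S.image f) := by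
  rw [powerset_image, sum_image]
  intro S hS T hT hST
  have hST' : f '' S = f '' T := by exact_mod_cast congrArg ((↑) : Finset γ → Set γ) hST
  exact coe_injective ((hf.image_eq_image_iff (coe_subset.2 (mem_powerset.1 hS))
    (coe_subset.2 (mem_powerset.1 hT))).1 hST')

theorem tutte_multiEps [Finite V] (D : Finset (Sym2 V)) (μ : Sym2 V → ℕ) (hμ : ∀ d ∈ D, 1 ≤ μ d)
    (x y : ℂ) :
    tutte (multiEps D μ) x y =
      ∑ S ∈ D.powerset, (x - 1) ^ (rk id (D : Set (Sym2 V)) - rk id (S : Set (Sym2 V))) *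
        (y - 1) ^ (#S - rk id (S : Set (Sym2 V))) * ∏ d ∈ S, y1 y (μ d) := by
  have (d : D) : Nonempty (Fin (μ d)) := ⟨0, hμ d d.2⟩
  have hrk (A : Set D) : rk ((↑) : D → Sym2 V) A = rk id ((↑) '' A : Set (Sym2 V)) :=
    rk_comp id _ A
  have himage : univ.image ((↑) : D → Sym2 V) = D := by simp
  have hsum := sum_powerset_image (s := univ) (Subtype.val_injective (p := (· ∈ D))).injOn fun S =>
    (x - 1) ^ (rk id (D : Set (Sym2 V)) - rk id (S : Set (Sym2 V))) *
      (y - 1) ^ (#S - rk id (S : Set (Sym2 V))) * ∏ d ∈ S, y1 y (μ d)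
  rw [himage, powerset_univ] at hsum
  rw [hsum]
  refine (tutte_sigma ((↑) : D → Sym2 V) x y).trans (sum_congr rfl fun S _ => ?_)
  rw [hrk, hrk, Set.image_univ, Subtype.range_coe, coe_image,
    card_image_of_injective _ Subtype.val_injective, prod_image Subtype.val_injective.injOn]
  simp only [Fintype.card_fin]

end Thickening

section LeastMissingElement

open Finset

variable {ι R : Type*}

theorem sum_ssubsets_insert [AddCommMonoid R] [DecidableEq ι] {b : ι} {s : Finset ι} (hb : b ∉ s)
    (f : Finset ι → R) :
    ∑ S ∈ (insert b s).ssubsets, f S =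
      ∑ S ∈ s.powerset, f S + ∑ S ∈ s.ssubsets, f (insert b S) := by
  have hssubsets (t : Finset ι) : t.ssubsets = {S ∈ t.powerset | S ≠ t} := by
    rw [ssubsets, filter_ne']
  rw [hssubsets, hssubsets, sum_filter, sum_filter, sum_powerset_insert hb]
  congr 1 <;> refine sum_congr rfl fun S hS => ?_ <;>
    have hbS : b ∉ S := fun h => hb (mem_powerset.1 hS h)
  · exact if_pos (ne_of_mem_of_not_mem' (mem_insert_self b s) hbS).symm
  · refine if_congr (not_congr ⟨fun h => ?_, fun h => by rw [h]⟩) rfl rfl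
    rw [← erase_insert hbS, h, erase_insert hb]

/-- The index `k` is the least element of `s` missing from `S`. -/
theorem sum_ssubsets_pow_mul_prod [LinearOrder ι] [CommSemiring R] (X : R) (a : ι → R)
    (s : Finset ι) :
    ∑ S ∈ s.ssubsets, X ^ (#s - 1 - #S) * ∏ j ∈ S, a j =
      ∑ k ∈ s, (∏ j ∈ s with k < j, (a j + X)) * ∏ j ∈ s with j < k, a j := by
  induction s using Finset.induction_on_min with
  | empty => simp [ssubsets]
  | insert b s hb ih =>
    have hbs : b ∉ s := fun h => lt_irrefl b (hb b h)
    rw [sum_ssubsets_insert hbs, sum_insert hbs, card_insert_of_notMem hbs, Nat.add_sub_cancel]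
    congr 1
    · have hgt : {j ∈ insert b s | b < j} = s := by
        rw [filter_insert, if_neg (lt_irrefl b), filter_true_of_mem hb]
      have hlt : {j ∈ insert b s | j < b} = ∅ := by
        rw [filter_insert, if_neg (lt_irrefl b), filter_false_of_mem fun j hj => (hb j hj).not_gt]
      rw [hgt, hlt, prod_empty, mul_one, prod_add]
      refine sum_congr rfl fun S hS => ?_
      rw [prod_const, card_sdiff_of_subset (mem_powerset.1 hS), mul_comm]
    · calc ∑ S ∈ s.ssubsets, X ^ (#s - #(insert b S)) * ∏ j ∈ insert b S, a j
          = a b * ∑ S ∈ s.ssubsets, X ^ (#s - 1 - #S) * ∏ j ∈ S, a j := by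
            rw [mul_sum]
            refine sum_congr rfl fun S hS => ?_
            have hbS : b ∉ S := fun h => hbs ((mem_ssubsets.1 hS).subset h)
            rw [prod_insert hbS, card_insert_of_notMem hbS, Nat.sub_sub, add_comm 1]
            ring
        _ = ∑ k ∈ s, (∏ j ∈ insert b s with k < j, (a j + X)) *
              ∏ j ∈ insert b s with j < k, a j := by
            rw [ih, mul_sum]
            refine sum_congr rfl fun k hk => ?_
            rw [filter_insert, if_neg (hb k hk).not_gt, filter_insert, if_pos (hb k hk),
              prod_insert (by simp [hbs])]
            ring

theorem sum_ssubsets_Icc_pow_mul_prod [CommSemiring R] (X : R) (a : ℕ → R) (n : ℕ) :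
    ∑ S ∈ (Icc 1 n).ssubsets, X ^ (n - 1 - #S) * ∏ j ∈ S, a j =
      ∑ k ∈ Icc 1 n, (∏ j ∈ Icc (k + 1) n, (a j + X)) * ∏ j ∈ Icc 1 (k - 1), a j := by
  have h := sum_ssubsets_pow_mul_prod X a (Icc 1 n)
  rw [Nat.card_Icc, Nat.add_sub_cancel] at h
  rw [h]
  refine sum_congr rfl fun k hk => ?_
  have hgt : {j ∈ Icc 1 n | k < j} = Icc (k + 1) n := by grind
  have hlt : {j ∈ Icc 1 n | j < k} = Icc 1 (k - 1) := by grind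
  rw [hgt, hlt]

end LeastMissingElement

section Cycle

open Finset

variable {n : ℕ}

theorem reachable_cycEdge {a b : ℕ} (hab : a ≤ b) {A : Set ℕ} (hA : Set.Ioc a b ⊆ A) :
    (graphOf (cycEdge n) A).Reachable a b := by
  induction b, hab using Nat.le_induction with
  | base => rfl
  | succ b hab ih =>
    refine (ih ((Set.Ioc_subset_Ioc_right b.le_succ).trans hA)).trans ?_
    by_cases hloop : (b : ZMod n) = (b + 1 : ℕ)
    · rw [← hloop]
    · have hmem : b + 1 ∈ A := hA ⟨Nat.lt_succ_of_le hab, le_rfl⟩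
      have hadj : (graphOf (cycEdge n) A).Adj b (b + 1 : ℕ) :=
        (SimpleGraph.fromEdgeSet_adj _).2 ⟨⟨b + 1, hmem, by simp [cycEdge]⟩, hloop⟩
      exact hadj.reachable

theorem connected_graphOf_cycEdge {k : ℕ} (hk : k ∈ Set.Icc 1 n) {A : Set ℕ}
    (hA : Set.Icc 1 n \ {k} ⊆ A) : (graphOf (cycEdge n) A).Connected := by
  have : NeZero n := ⟨by have := hk.1.trans hk.2; omega⟩
  rw [SimpleGraph.connected_iff_exists_forall_reachable]
  refine ⟨0, fun v => ?_⟩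
  have hv := v.val_lt
  rw [← v.natCast_zmod_val]
  rcases lt_or_ge v.val k with hvk | hkv
  · rw [← Nat.cast_zero]
    exact reachable_cycEdge (Nat.zero_le _) fun j hj =>
      hA ⟨⟨hj.1, hj.2.trans hv.le⟩, (hj.2.trans_lt hvk).ne⟩
  · rw [← ZMod.natCast_self]
    exact (reachable_cycEdge hv.le fun j hj =>
      hA ⟨⟨Nat.one_le_of_lt hj.1, hj.2⟩, (hkv.trans_lt hj.1).ne'⟩).symm

theorem rk_cycEdge_Icc [NeZero n] : rk (cycEdge n) (Icc 1 n : Finset ℕ) = n - 1 := by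
  have hn : n ∈ Set.Icc 1 n := ⟨NeZero.one_le, le_rfl⟩
  rw [coe_Icc, rk_eq_card_sub_one _ (connected_graphOf_cycEdge hn Set.sdiff_subset), Nat.card_zmod]

/-- A proper set of edges of the cycle extends to a spanning path, whose rank is its number of
edges. -/
theorem rk_cycEdge_of_ssubset {S : Finset ℕ} (hS : S ⊂ Icc 1 n) : rk (cycEdge n) S = #S := by
  obtain ⟨k, hk, hkS⟩ := exists_of_ssubset hS
  have hpath : ((Icc 1 n).erase k : Set ℕ) = Set.Icc 1 n \ {k} := by simp
  have hrk : rk (cycEdge n) ((Icc 1 n).erase k) = ((Icc 1 n).erase k : Set ℕ).ncard := by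
    rw [rk_eq_card_sub_one _ (connected_graphOf_cycEdge (mem_Icc.1 hk) hpath.ge), Nat.card_zmod,
      Set.ncard_coe_finset, card_erase_of_mem hk, Nat.card_Icc, Nat.add_sub_cancel]
  have : NeZero n := ⟨by grind⟩
  rw [rk_eq_ncard_of_subset _ (finite_toSet _) hrk
    (coe_subset.2 (subset_erase.2 ⟨hS.subset, hkS⟩)), Set.ncard_coe_finset]

theorem cycEdge_injOn (hn : 3 ≤ n) : Set.InjOn (cycEdge n) (Set.Icc 1 n) := by
  intro i ⟨hi, hin⟩ j ⟨hj, hjn⟩ hij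
  have hne : (2 : ZMod n) ≠ 0 := by
    intro h
    have := Nat.le_of_dvd two_pos ((ZMod.natCast_eq_zero_iff 2 n).1 (by exact_mod_cast h))
    omega
  rcases Sym2.eq_iff.1 hij with ⟨hpred, -⟩ | ⟨hpred, hsucc⟩
  · have hcast : ((i - 1 : ℕ) : ZMod n) = (j - 1 : ℕ) := by
      rwa [Nat.cast_pred hi, Nat.cast_pred hj]
    have := CharP.natCast_injOn_Iio (ZMod n) n (Set.mem_Iio.2 (by omega))
      (Set.mem_Iio.2 (by omega)) hcast
    omega
  · exact absurd (by linear_combination hsucc - hpred) hne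

theorem image_cycEdge_Icc [NeZero n] :
    (Icc 1 n).image (cycEdge n) = univ.image fun j : ZMod n => s(j - 1, j) := by
  have hcast : (Icc 1 n).image ((↑) : ℕ → ZMod n) = univ :=
    eq_univ_of_forall fun j => mem_image.2
      ⟨(j - 1).val + 1, mem_Icc.2 ⟨Nat.le_add_left _ _, ZMod.val_lt _⟩, by simp⟩
  rw [← hcast, image_image]
  rfl

theorem tutte_multiEps_cycle (hn : 3 ≤ n) (μ : Sym2 (ZMod n) → ℕ)
    (hμ : ∀ j ∈ Icc 1 n, 1 ≤ μ (cycEdge n j)) (x y : ℂ) :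
    tutte (multiEps ((Icc 1 n).image (cycEdge n)) μ) x y =
      ∑ S ∈ (Icc 1 n).ssubsets, (x - 1) ^ (n - 1 - #S) * ∏ j ∈ S, y1 y (μ (cycEdge n j)) +
        (y - 1) * ∏ j ∈ Icc 1 n, y1 y (μ (cycEdge n j)) := by
  have : NeZero n := ⟨by omega⟩
  have hinj : Set.InjOn (cycEdge n) (Icc 1 n : Finset ℕ) := by simpa using cycEdge_injOn hn
  have hrk (S : Finset ℕ) :
      rk id (S.image (cycEdge n) : Set (Sym2 (ZMod n))) = rk (cycEdge n) S := by
    rw [coe_image, ← rk_comp, Function.id_comp]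
  rw [tutte_multiEps _ _ (forall_mem_image.2 hμ), sum_powerset_image hinj,
    ← sum_erase_add _ _ (mem_powerset_self _)]
  simp only [hrk, rk_cycEdge_Icc]
  congr 1
  · refine sum_congr rfl fun S hS => ?_
    have hss : S ⊂ Icc 1 n := mem_ssubsets.1 hS
    have hinjS := hinj.mono (coe_subset.2 hss.subset)
    rw [rk_cycEdge_of_ssubset hss, card_image_of_injOn hinjS, prod_image hinjS, Nat.sub_self,
      pow_zero, mul_one]
  · rw [card_image_of_injOn hinj, prod_image hinj, Nat.card_Icc, Nat.sub_self, pow_zero, one_mul,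
      show n + 1 - 1 - (n - 1) = 1 by omega, pow_one]

end Cycle

theorem yx_eq_y1_add (x y : ℂ) (j : ℕ) : yx x y j = y1 y j + (x - 1) := by
  rw [yx, y1]
  ring

/-- Follows from `y_1(a + b) = y_1(a) + y^a y_1(b)` and `(y - 1) y_1(a) = y^a - 1`. -/
theorem yx_add (x y : ℂ) {a b : ℕ} (ha : 1 ≤ a) (hb : 1 ≤ b) :
    yx x y (a + b) = yx x y b + y1 y a + (y - 1) * (y1 y a * y1 y b) := by
  have h := mul_neg_geom_sum y a
  rw [yx_eq_y1_add, yx_eq_y1_add, y1_eq_geom_sum y ha, y1_eq_geom_sum y hb,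
    y1_eq_geom_sum y (by omega), Finset.sum_range_add]
  simp only [pow_add, ← Finset.mul_sum]
  linear_combination (∑ i ∈ Finset.range b, y ^ i) * h

theorem sum_yx_prod_add_sub_one_mul_prod (x y : ℂ) {n : ℕ} (hn : 2 ≤ n) (m : ℕ → ℕ)
    (hpred : 1 ≤ m (n - 1)) (hlast : 1 ≤ m n) :
    ∑ k ∈ Finset.Icc 1 n,
        (∏ j ∈ Finset.Icc (k + 1) n, yx x y (m j)) * ∏ j ∈ Finset.Icc 1 (k - 1), y1 y (m j) +
        (y - 1) * ∏ j ∈ Finset.Icc 1 n, y1 y (m j) =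
      ∑ k ∈ Finset.Icc 1 (n - 2),
        (∏ j ∈ Finset.Icc (k + 1) n, yx x y (m j)) * ∏ j ∈ Finset.Icc 1 (k - 1), y1 y (m j) +
        yx x y (m (n - 1) + m n) * ∏ j ∈ Finset.Icc 1 (n - 2), y1 y (m j) := by
  obtain ⟨N, rfl⟩ := Nat.exists_eq_add_of_le' hn
  set T : ℕ → ℂ := fun k =>
    (∏ j ∈ Finset.Icc (k + 1) (N + 2), yx x y (m j)) * ∏ j ∈ Finset.Icc 1 (k - 1), y1 y (m j)
  set P : ℂ := ∏ j ∈ Finset.Icc 1 N, y1 y (m j)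
  have hprod (k : ℕ) : ∏ j ∈ Finset.Icc 1 (k + 1), y1 y (m j) =
      (∏ j ∈ Finset.Icc 1 k, y1 y (m j)) * y1 y (m (k + 1)) :=
    Finset.prod_Icc_succ_top (Nat.le_add_left 1 k) _
  have hTpred : T (N + 1) = yx x y (m (N + 2)) * P := by simp [T, P]
  have hTlast : T (N + 2) = P * y1 y (m (N + 1)) := by simp [T, P, hprod]
  calc ∑ k ∈ Finset.Icc 1 (N + 2), T k + (y - 1) * ∏ j ∈ Finset.Icc 1 (N + 2), y1 y (m j)
      = ∑ k ∈ Finset.Icc 1 N, T k + T (N + 1) + T (N + 2) +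
          (y - 1) * (P * y1 y (m (N + 1)) * y1 y (m (N + 2))) := by
        rw [hprod, hprod, Finset.sum_Icc_succ_top (by omega), Finset.sum_Icc_succ_top (by omega)]
    _ = ∑ k ∈ Finset.Icc 1 N, T k + yx x y (m (N + 1) + m (N + 2)) * P := by
        rw [hTpred, hTlast, yx_add x y (a := m (N + 1)) hpred hlast]
        ring

/-- **Haggard–Pearce–Royle.** Let `n ≥ 3` and let `G` be the multigraph on
`ℤ_n` whose underlying graph is the `n`-cycle with edges `e_j = {j−1, j}` and multiplicities
`m_j = μ(e_j) ≥ 1`.  Then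
`T(G;x,y) = Σ_{k=1}^{n−2} (Π_{j=k+1}^n y_x(m_j) Π_{j=1}^{k−1} y_1(m_j))
  + y_x(m_{n−1}+m_n) Π_{j=1}^{n−2} y_1(m_j)`. -/
theorem statement16 (n : ℕ) [NeZero n] (hn : 3 ≤ n) (μ : Sym2 (ZMod n) → ℕ)
    (hμ : ∀ j : ZMod n, 1 ≤ μ s(j - 1, j)) (x y : ℂ) :
    tutte (multiEps (Finset.image (fun j : ZMod n => s(j - 1, j)) Finset.univ) μ) x y =
      (∑ k ∈ Finset.Icc 1 (n - 2),
        (∏ j ∈ Finset.Icc (k + 1) n, yx x y (μ (cycEdge n j))) *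
          ∏ j ∈ Finset.Icc 1 (k - 1), y1 y (μ (cycEdge n j))) +
      yx x y (μ (cycEdge n (n - 1)) + μ (cycEdge n n)) *
        ∏ j ∈ Finset.Icc 1 (n - 2), y1 y (μ (cycEdge n j)) := by
  have hcyc (j : ℕ) : 1 ≤ μ (cycEdge n j) := hμ j
  rw [← image_cycEdge_Icc, tutte_multiEps_cycle hn μ fun j _ => hcyc j,
    sum_ssubsets_Icc_pow_mul_prod]
  simp only [← yx_eq_y1_add]
  exact sum_yx_prod_add_sub_one_mul_prod x y (by omega) (fun j => μ (cycEdge n j))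
    (hcyc (n - 1)) (hcyc n)
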